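/- Define Δ_d^sat ∈ ℂ[A] as the polynomial of smallest total degree (unique up to scalar) such that Δ_d = Δ_d^sat · Δ^k for some k ∈ ℕ. Then Δ_d^sat is a perfect square in ℂ[A], and its square root √(Δ_d^sat) divides det K_d(f) in ℂ[A] for every nonzero f ∈ ℂ[x_1,…,x_n]_d. -/

import Mathlib

noncomputable section

/-! ## Zariski topology on complex affine space -/

/-- The Zariski topology on the affine space `ι → ℂ`: the basic open sets are the
complements of hypersurfaces. -/
def zTop (ι : Type*) : TopologicalSpace (ι → ℂ) :=
  TopologicalSpace.generateFrom
    {U | ∃ p : MvPolynomial ι ℂ, U = {x | MvPolynomial.eval x p ≠ 0}}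

/-- Zariski open subset of affine space. -/
def zOpen {ι : Type*} (U : Set (ι → ℂ)) : Prop := @IsOpen _ (zTop ι) U

/-- Zariski closed subset of affine space. -/
def zClosed {ι : Type*} (Z : Set (ι → ℂ)) : Prop := @IsClosed _ (zTop ι) Z

/-- Zariski density. -/
def zDense {ι : Type*} (S : Set (ι → ℂ)) : Prop := @Dense _ (zTop ι) S

/-- Zariski closure. -/
def zClosure {ι : Type*} (S : Set (ι → ℂ)) : Set (ι → ℂ) := @closure _ (zTop ι) S

/-- Irreducibility in the Zariski topology. -/
def zIrred {ι : Type*} (S : Set (ι → ℂ)) : Prop := @IsIrreducible _ (zTop ι) S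

/-- The dimension of a subset of affine space: the topological Krull dimension of the
subspace topology induced by the Zariski topology. -/
def zDim {ι : Type*} (S : Set (ι → ℂ)) : WithBot ℕ∞ :=
  @topologicalKrullDim S (TopologicalSpace.induced Subtype.val (zTop ι))

/-- The common zero set of a family of polynomials. -/
def vanishSet {ι : Type*} (S : Set (MvPolynomial ι ℂ)) : Set (ι → ℂ) :=
  {x | ∀ p ∈ S, MvPolynomial.eval x p = 0}

/-- The ideal of all polynomials vanishing on a subset of affine space. -/
def vanishingIdealOf {ι : Type*} (X : Set (ι → ℂ)) : Ideal (MvPolynomial ι ℂ) where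
  carrier := {p | ∀ x ∈ X, MvPolynomial.eval x p = 0}
  add_mem' := by
    intro a b ha hb x hx
    simp [ha x hx, hb x hx]
  zero_mem' := by
    intro x hx
    simp
  smul_mem' := by
    intro c p hp x hx
    simp [smul_eq_mul, hp x hx]

/-- A subset of `ι → ℂ` is a cone if it is stable under scalar multiplication. -/
def IsCone {ι : Type*} (X : Set (ι → ℂ)) : Prop :=
  ∀ (c : ℂ) (v : ι → ℂ), v ∈ X → c • v ∈ X

/-- The affine-linear subspace cut out by `k` affine-linear equations whose coefficients are
recorded by `a` (the `none` coordinate records the constant term). -/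
def affSlice {ι : Type*} [Fintype ι] {k : ℕ} (a : Fin k × Option ι → ℂ) : Set (ι → ℂ) :=
  {x | ∀ j : Fin k, a (j, none) + ∑ i : ι, a (j, some i) * x i = 0}

/-- `hasConeDegree C k δ` : the projective variety with affine cone `C ⊆ ℂ^ι` and projective
dimension `k` has degree `δ`, expressed by saying that a generic affine-linear slice of `C` of
codimension `k + 1` consists of exactly `δ` points. -/
def hasConeDegree {ι : Type*} [Fintype ι] (C : Set (ι → ℂ)) (k δ : ℕ) : Prop :=
  ∃ U : Set (Fin (k + 1) × Option ι → ℂ), zOpen U ∧ zDense U ∧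
    ∀ a ∈ U, (C ∩ affSlice a).ncard = δ

/-! ## Eigenvectors and the Kalman variety -/

/-- `v` is an eigenvector of the matrix `A`. -/
def IsEigenvector {n : ℕ} (A : Matrix (Fin n) (Fin n) ℂ) (v : Fin n → ℂ) : Prop :=
  v ≠ 0 ∧ ∃ lam : ℂ, A.mulVec v = lam • v

/-- The space of `n × n` complex matrices, presented as an affine space. -/
abbrev MatSpace (n : ℕ) := Fin n × Fin n → ℂ

/-- The matrix corresponding to a point of `MatSpace n`. -/
def toMat {n : ℕ} (A : MatSpace n) : Matrix (Fin n) (Fin n) ℂ :=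
  Matrix.of fun i j => A (i, j)

/-- The affine cone over the Kalman variety `𝒦(X)` of the projective variety whose affine
cone is `X`: all matrices having an eigenvector lying on `X`. -/
def kalmanCone {n : ℕ} (X : Set (Fin n → ℂ)) : Set (MatSpace n) :=
  {A | ∃ v ∈ X, IsEigenvector (toMat A) v}



/-! ## Symmetric powers of matrices and Kalman matrices -/

/-- Index set for the monomials of degree `d` in `n` variables. -/
abbrev MonIdx (n d : ℕ) := Sym (Fin n) d

/-- The exponent vector of the monomial indexed by `σ`. -/
def monExp {n d : ℕ} (σ : MonIdx n d) : Fin n →₀ ℕ :=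
  Multiset.toFinsupp (σ : Multiset (Fin n))

/-- The generic `n × n` matrix, whose entries are the variables of `ℂ[A]`. -/
def genMat (n : ℕ) : Matrix (Fin n) (Fin n) (MvPolynomial (Fin n × Fin n) ℂ) :=
  Matrix.of fun i j => MvPolynomial.X (i, j)

/-- The `d`-th symmetric power `ρ_d(A)` of a square matrix `A`, i.e. the matrix (in the basis of
monomials of degree `d`) of the induced action of `A` on forms of degree `d`: the entry at
`(τ, σ)` is the coefficient of `x^σ` in `(A·x)^τ`. -/
def symPow {R : Type*} [CommRing R] {n : ℕ} (d : ℕ) (A : Matrix (Fin n) (Fin n) R) :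
    Matrix (MonIdx n d) (MonIdx n d) R :=
  Matrix.of fun τ σ =>
    MvPolynomial.coeff (monExp σ)
      (∏ j : Fin n, (∑ k : Fin n, MvPolynomial.C (A j k) * MvPolynomial.X k) ^ (monExp τ j))

/-- The coefficient vector of a form of degree `d`. -/
def coeffVec {n : ℕ} (d : ℕ) (f : MvPolynomial (Fin n) ℂ) : MonIdx n d → ℂ :=
  fun σ => MvPolynomial.coeff (monExp σ) f

/-- The form of degree `d` with coefficient vector `c`. -/
def polyOf {n d : ℕ} (c : MonIdx n d → ℂ) : MvPolynomial (Fin n) ℂ :=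
  ∑ σ : MonIdx n d, MvPolynomial.monomial (monExp σ) (c σ)

/-- The rectangular Kalman matrix of order `d` associated with a `p × N` coefficient matrix `C`:
its rows are the rows of `C`, `C·ρ_d(A)`, ..., `C·ρ_d(A)^{t-1}` for the generic matrix `A`. -/
def kalmanMat {n d p : ℕ} (t : ℕ) (C : Matrix (Fin p) (MonIdx n d) ℂ) :
    Matrix (Fin t × Fin p) (MonIdx n d) (MvPolynomial (Fin n × Fin n) ℂ) :=
  Matrix.of fun r τ =>
    ∑ κ : MonIdx n d, MvPolynomial.C (C r.2 κ) * ((symPow d (genMat n)) ^ (r.1 : ℕ)) κ τ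

/-- The square Kalman matrix `K_d(f)` of a form `f` with coefficient vector `c`: the rows are
`C_f ρ_d(A)^i` for `i = 0, …, N - 1` (indexed by monomials through a fixed enumeration). -/
def kalmanSq {n : ℕ} (d : ℕ) (c : MonIdx n d → ℂ) :
    Matrix (MonIdx n d) (MonIdx n d) (MvPolynomial (Fin n × Fin n) ℂ) :=
  Matrix.of fun σ τ =>
    ∑ κ : MonIdx n d, MvPolynomial.C (c κ) *
      ((symPow d (genMat n)) ^ ((Fintype.equivFin (MonIdx n d)) σ : ℕ)) κ τ

/-- The determinant of the square Kalman matrix of order `d`. -/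
def kalmanDet {n : ℕ} (d : ℕ) (c : MonIdx n d → ℂ) : MvPolynomial (Fin n × Fin n) ℂ :=
  (kalmanSq d c).det

/-- The locus of matrices at which all maximal minors of a (rectangular) matrix of polynomials
in `ℂ[A]` vanish. -/
def maxMinorsZeroSet {n d : ℕ} {ridx : Type*}
    (M : Matrix ridx (MonIdx n d) (MvPolynomial (Fin n × Fin n) ℂ)) : Set (MatSpace n) :=
  {A | ∀ e : MonIdx n d → ridx, Function.Injective e →
    MvPolynomial.eval A (Matrix.det (Matrix.of fun σ τ => M (e σ) τ)) = 0}



/-! ## Polarizations and μ-Kalman varieties -/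

/-- Evaluation of the multihomogeneous polarization `f_μ` of `f` at a tuple of vectors
`v_1, …, v_s` (up to a nonzero rational normalization constant): the coefficient of `t^μ`
in `f(t_1 v_1 + ⋯ + t_s v_s)`. -/
def polarEval {n s : ℕ} (f : MvPolynomial (Fin n) ℂ) (μ : Fin s → ℕ)
    (v : Fin s → Fin n → ℂ) : ℂ :=
  MvPolynomial.coeff (Finsupp.equivFunOnFinite.symm μ)
    (MvPolynomial.eval₂ MvPolynomial.C
      (fun k => ∑ i : Fin s, MvPolynomial.C (v i k) * MvPolynomial.X i) f)

/-- The affine cone over the `μ`-Kalman variety `𝒦_μ(f)`: the Zariski closure of the set of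
matrices admitting linearly independent eigenvectors `v_1, …, v_s` with `f_μ(v_1, …, v_s) = 0`. -/
def muKalmanCone {n : ℕ} (f : MvPolynomial (Fin n) ℂ) {s : ℕ} (μ : Fin s → ℕ) :
    Set (MatSpace n) :=
  zClosure {A | ∃ v : Fin s → (Fin n → ℂ),
    (∀ i, IsEigenvector (toMat A) (v i)) ∧ LinearIndependent ℂ v ∧ polarEval f μ v = 0}

/-- The parts of a partition of `d`, listed as a tuple. -/
def partTuple (d : ℕ) (μ : Nat.Partition d) : Fin (Multiset.card μ.parts) → ℕ :=
  fun i => μ.parts.toList.get (i.cast (Multiset.length_toList _).symm)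

/-- The multiset of nonzero exponents of the monomial indexed by `σ`. -/
def expMultiset {n d : ℕ} (σ : Sym (Fin n) d) : Multiset ℕ :=
  Multiset.filter (fun e => e ≠ 0)
    (Multiset.map (fun i => Multiset.toFinsupp (σ : Multiset (Fin n)) i) Finset.univ.val)

/-! ## Tangent spaces, smooth points and singular loci -/

/-- The Zariski tangent space of `X ⊆ ℂ^ι` at `x`: the common kernel of the differentials at
`x` of all polynomials vanishing on `X`. -/
def tangentSpace {ι : Type*} [Fintype ι] (X : Set (ι → ℂ)) (x : ι → ℂ) :
    Submodule ℂ (ι → ℂ) where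
  carrier := {u | ∀ p : MvPolynomial ι ℂ, (∀ y ∈ X, MvPolynomial.eval y p = 0) →
      ∑ i : ι, u i * MvPolynomial.eval x (MvPolynomial.pderiv i p) = 0}
  add_mem' := by
    intro a b ha hb p hp
    have h1 := ha p hp
    have h2 := hb p hp
    simp only [Pi.add_apply, add_mul, Finset.sum_add_distrib, h1, h2, add_zero]
  zero_mem' := by
    intro p hp
    simp
  smul_mem' := by
    intro c u hu p hp
    have h1 := hu p hp
    simp only [Pi.smul_apply, smul_eq_mul, mul_assoc, ← Finset.mul_sum, h1, mul_zero]

/-- The local dimension of `X` at `x`, in the Zariski topology. -/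
def zLocalDim {ι : Type*} (X : Set (ι → ℂ)) (x : ι → ℂ) : WithBot ℕ∞ :=
  ⨅ (U : Set (ι → ℂ)) (_ : zOpen U) (_ : x ∈ U), zDim (X ∩ U)

/-- `x` is a smooth point of `X`: the Zariski tangent space has dimension equal to the local
dimension of `X` at `x`. -/
def smoothAt {ι : Type*} [Fintype ι] (X : Set (ι → ℂ)) (x : ι → ℂ) : Prop :=
  ((Module.finrank ℂ (tangentSpace X x) : ℕ∞) : WithBot ℕ∞) = zLocalDim X x

/-- The affine cone over the singular locus of the projective variety whose affine cone is `X`: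
the nonzero points of `X` that are not smooth points. -/
def projSingCone {ι : Type*} [Fintype ι] (X : Set (ι → ℂ)) : Set (ι → ℂ) :=
  {x | x ∈ X ∧ x ≠ 0 ∧ ¬ smoothAt X x}

/-- The affine cone over the (reduced) singular locus of the Kalman variety of the projective
variety with affine cone `X`. -/
def singKalmanCone {n : ℕ} (X : Set (Fin n → ℂ)) : Set (MatSpace n) :=
  zClosure (projSingCone (zClosure (kalmanCone X)))



/-! ## The spaces `ℙ_s = ℙ^{n²-1} × (ℙ^{n-1})^s` (as multicones) -/

/-- Coordinates for the multicone over `ℙ^{n²-1} × (ℙ^{n-1})^{×s}`. -/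
abbrev MIdx (n s : ℕ) := (Fin n × Fin n) ⊕ (Fin s × Fin n)

/-- The matrix component of a point of the multicone. -/
def matPart {n s : ℕ} (x : MIdx n s → ℂ) : MatSpace n := fun ij => x (Sum.inl ij)

/-- The `i`-th vector component of a point of the multicone. -/
def vecPart {n s : ℕ} (x : MIdx n s → ℂ) (i : Fin s) : Fin n → ℂ := fun k => x (Sum.inr (i, k))

/-- A partition of `{1, …, s}` into `k` (indexed) nonempty pairwise disjoint blocks. -/
structure IdxPartition (s k : ℕ) where
  block : Fin k → Finset (Fin s)
  nonempty : ∀ i, (block i).Nonempty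
  disj : ∀ i j, i ≠ j → Disjoint (block i) (block j)
  cover : ∀ p : Fin s, ∃ i, p ∈ block i

/-- The minimal representative of the `i`-th block. -/
def IdxPartition.rep {s k : ℕ} (P : IdxPartition s k) (i : Fin k) : Fin s :=
  (P.block i).min' (P.nonempty i)

/-- The finest partition, all of whose blocks are singletons. -/
def singletonPartition (s : ℕ) : IdxPartition s s where
  block i := {i}
  nonempty i := ⟨i, by simp⟩
  disj i j h := Finset.disjoint_singleton.2 h
  cover p := ⟨p, by simp⟩

/-- A tuple of nonzero vectors is `P`-compatible: vectors within each block of `P` are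
proportional, and representatives of the distinct blocks are linearly independent. -/
def PCompatible {n s k : ℕ} (P : IdxPartition s k) (v : Fin s → Fin n → ℂ) : Prop :=
  (∀ p, v p ≠ 0) ∧
  (∀ i, ∀ p ∈ P.block i, ∀ q ∈ P.block i, ∃ c : ℂ, v p = c • v q) ∧
  (∀ r : Fin k → Fin s, (∀ i, r i ∈ P.block i) → LinearIndependent ℂ (fun i => v (r i)))

/-- The multicone over `W_s`: tuples `(A, v_1, …, v_s)` where each `v_i` is an eigenvector of
the (nonzero) matrix `A`. -/
def Wcone (n s : ℕ) : Set (MIdx n s → ℂ) :=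
  {x | matPart x ≠ 0 ∧ ∀ i, IsEigenvector (toMat (matPart x)) (vecPart x i)}

/-- The multicone over `W_{s,P}`: the Zariski closure of the set of tuples in `W_s` whose
vector part is `P`-compatible. -/
def WsPcone (n : ℕ) {s k : ℕ} (P : IdxPartition s k) : Set (MIdx n s → ℂ) :=
  zClosure {x | x ∈ Wcone n s ∧ PCompatible P (fun i => vecPart x i)}

/-! ## Multidegrees -/

/-- Parameter space for a multiprojective slice of multidegree type `γ`. -/
abbrev MSliceParam (n s : ℕ) (γ : Fin (s + 1) → ℕ) : Type :=
  (Fin (n ^ 2 - γ 0) × Option (Fin n × Fin n)) ⊕ ((Σ j : Fin s, Fin (n - γ j.succ)) × Option (Fin n))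

/-- The multiprojective affine-linear slice with parameters `a`: it cuts the matrix factor by
`n² - γ 0` affine-linear equations and the `j`-th vector factor by `n - γ (j+1)` affine-linear
equations. -/
def mSlice {n s : ℕ} (γ : Fin (s + 1) → ℕ) (a : MSliceParam n s γ → ℂ) :
    Set (MIdx n s → ℂ) :=
  {x | (∀ r : Fin (n ^ 2 - γ 0),
          a (Sum.inl (r, none)) +
            ∑ ij : Fin n × Fin n, a (Sum.inl (r, some ij)) * x (Sum.inl ij) = 0) ∧
       (∀ j : Fin s, ∀ r : Fin (n - γ j.succ),
          a (Sum.inr (⟨j, r⟩, none)) +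
            ∑ k : Fin n, a (Sum.inr (⟨j, r⟩, some k)) * x (Sum.inr (j, k)) = 0)}

/-- `hasMD W γ δ` : the coefficient of the monomial `h_0^{γ 0} h_1^{γ 1} ⋯ h_s^{γ s}` in the
Chow class of the multiprojective variety with multicone `W ⊆ ℂ^{n²} × (ℂ^n)^s` equals `δ`:
a generic multiprojective slice of type `γ` meets `W` in exactly `δ` points. -/
def hasMD {n s : ℕ} (W : Set (MIdx n s → ℂ)) (γ : Fin (s + 1) → ℕ) (δ : ℕ) : Prop :=
  ∃ U : Set (MSliceParam n s γ → ℂ), zOpen U ∧ zDense U ∧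
    ∀ a ∈ U, (W ∩ mSlice γ a).ncard = δ

/-- The exponent vector of the monomial `h_0 · h_1^{n-1} ⋯ h_i^{n-2} ⋯ h_s^{n-1}`. -/
def specialExp (n s : ℕ) (i : Fin s) : Fin (s + 1) → ℕ :=
  fun j => if j = 0 then 1 else if j = i.succ then n - 2 else n - 1

/-- `γ` lies in the box of admissible exponents of the Chow ring of `ℙ^{n²-1} × (ℙ^{n-1})^s`. -/
def inBox (n s : ℕ) (γ : Fin (s + 1) → ℕ) : Prop :=
  γ 0 < n ^ 2 ∧ ∀ j : Fin s, γ j.succ < n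

/-- `representsClass W c q` : the polynomial `q` represents the Chow class of the
multiprojective variety with multicone `W`, of codimension `c`: its coefficients in the
admissible box in degree `c` are the multidegrees of `W`, and all other coefficients vanish. -/
def representsClass {n s : ℕ} (W : Set (MIdx n s → ℂ)) (c : ℕ)
    (q : MvPolynomial (Fin (s + 1)) ℤ) : Prop :=
  (∀ γ : Fin (s + 1) → ℕ, inBox n s γ → (∑ j, γ j) = c →
      ∃ δ : ℕ, q.coeff (Finsupp.equivFunOnFinite.symm γ) = (δ : ℤ) ∧ hasMD W γ δ) ∧
  (∀ γ : Fin (s + 1) → ℕ, ¬ (inBox n s γ ∧ (∑ j, γ j) = c) →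
      q.coeff (Finsupp.equivFunOnFinite.symm γ) = 0)

/-! ## The Chow ring of `ℙ^{n²-1} × (ℙ^{n-1})^s` -/

/-- The defining ideal of the Chow ring `ℤ[h_0, …, h_s]/(h_0^{n²}, h_1^n, …, h_s^n)`. -/
def chowIdeal (n s : ℕ) : Ideal (MvPolynomial (Fin (s + 1)) ℤ) :=
  Ideal.span ({MvPolynomial.X 0 ^ n ^ 2} ∪
    Set.range fun j : Fin s => MvPolynomial.X j.succ ^ n)

/-- The Chow ring `A^*(ℙ_s) = ℤ[h_0, …, h_s]/(h_0^{n²}, h_1^n, …, h_s^n)`. -/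
abbrev ChowRing (n s : ℕ) := MvPolynomial (Fin (s + 1)) ℤ ⧸ chowIdeal n s

/-- The variable substitution `h_0 ↦ t_0`, `h_i ↦ t_{q_i}` underlying `φ_P`. -/
def blockVarMap {s k : ℕ} (P : IdxPartition s k) : Fin (k + 1) → Fin (s + 1) :=
  Fin.cases 0 fun i => (P.rep i).succ

lemma phiP_aux {n s k : ℕ} (P : IdxPartition s k) :
    ∀ a ∈ chowIdeal n k,
      ((Ideal.Quotient.mk (chowIdeal n s)).comp
        (MvPolynomial.rename (R := ℤ) (blockVarMap P)).toRingHom) a = 0 := by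
  intro a ha
  rw [RingHom.comp_apply, Ideal.Quotient.eq_zero_iff_mem]
  have hmap : (MvPolynomial.rename (R := ℤ) (blockVarMap P)).toRingHom a ∈
      Ideal.map (MvPolynomial.rename (R := ℤ) (blockVarMap P)).toRingHom
        (chowIdeal n k) :=
    Ideal.mem_map_of_mem _ ha
  have hle : Ideal.map
      (MvPolynomial.rename (R := ℤ) (blockVarMap P)).toRingHom
      (chowIdeal n k) ≤ chowIdeal n s := by
    rw [chowIdeal, Ideal.map_span, Ideal.span_le]
    rintro q ⟨p, hp, rfl⟩
    rcases hp with hp | ⟨j, rfl⟩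
    · rw [Set.mem_singleton_iff] at hp
      subst hp
      simp only [AlgHom.toRingHom_eq_coe, RingHom.coe_coe, map_pow, MvPolynomial.rename_X,
        Fin.cases_zero]
      exact Ideal.subset_span (Or.inl rfl)
    · simp only [AlgHom.toRingHom_eq_coe, RingHom.coe_coe, map_pow, MvPolynomial.rename_X,
        Fin.cases_succ]
      exact Ideal.subset_span (Or.inr ⟨P.rep j, rfl⟩)
  exact hle hmap

/-- The ring map `φ_P : A^*(ℙ_k) → A^*(ℙ_s)` sending `h_0 ↦ t_0` and `h_i ↦ t_{q_i}`. -/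
def phiP (n : ℕ) {s k : ℕ} (P : IdxPartition s k) : ChowRing n k →+* ChowRing n s :=
  Ideal.Quotient.lift (chowIdeal n k)
    ((Ideal.Quotient.mk (chowIdeal n s)).comp
      (MvPolynomial.rename (R := ℤ) (blockVarMap P)).toRingHom)
    (phiP_aux P)



/-! ## Discriminants of characteristic polynomials -/

/-- `∏_{i<j} (l i - l j)^2` for a list `l`. -/
def listPairProdSq (l : List ℂ) : ℂ :=
  ∏ p ∈ Finset.univ.filter (fun p : Fin l.length × Fin l.length => p.1 < p.2),
    (l.get p.1 - l.get p.2) ^ 2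

/-- The product of the squared differences of all pairs of elements of a multiset; applied to
the multiset of roots of a characteristic polynomial this is the discriminant. -/
def pairProdSq (m : Multiset ℂ) : ℂ := listPairProdSq m.toList

/-- The coordinate vector (for the action of the symmetric power `ρ_d`) of the symmetric
product `v_1 ⋯ v_d` of the vectors `v i`: its `σ`-th coordinate is the coefficient of
`t_1 ⋯ t_d` in `∏_k (∑_i t_i v i k)^{σ_k}`. -/
def symProdVec {n d : ℕ} (v : Fin d → Fin n → ℂ) : MonIdx n d → ℂ := fun σ =>
  MvPolynomial.coeff (Finsupp.equivFunOnFinite.symm fun _ : Fin d => 1)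
    (∏ k : Fin n, (∑ i : Fin d, MvPolynomial.C (v i k) * MvPolynomial.X i) ^ (monExp σ k))


/-! ## Multiplicativity of symmetric powers -/

/-- The value of the monomial indexed by `τ` at a point `y`. -/
def monVal {T : Type*} [CommRing T] {n d : ℕ} (y : Fin n → T) (τ : MonIdx n d) : T :=
  ∏ j : Fin n, y j ^ (monExp τ j)

/-- The linear form given by a row of a matrix. -/
def linForm {T : Type*} [CommRing T] {n : ℕ} (A : Matrix (Fin n) (Fin n) T) (j : Fin n) :
    MvPolynomial (Fin n) T :=
  ∑ k : Fin n, MvPolynomial.C (A j k) * MvPolynomial.X k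

lemma symPow_apply {T : Type*} [CommRing T] {n : ℕ} (d : ℕ) (A : Matrix (Fin n) (Fin n) T)
    (τ σ : MonIdx n d) :
    symPow d A τ σ = MvPolynomial.coeff (monExp σ) (monVal (linForm A) τ) := rfl

lemma monExp_sum {n d : ℕ} (τ : MonIdx n d) : ∑ j, monExp τ j = d := by
  have h := Multiset.toFinsupp_sum_eq (τ : Multiset (Fin n))
  rw [Finsupp.sum_fintype _ _ (by simp)] at h
  simp only [id_eq, Sym.card_coe] at h
  exact h

lemma monExp_injective {n d : ℕ} : Function.Injective (monExp : MonIdx n d → _) := by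
  intro a b h
  exact Sym.coe_injective (Multiset.toFinsupp.injective h)

lemma exists_monExp {n d : ℕ} (m : Fin n →₀ ℕ) (h : m.degree = d) :
    ∃ σ : MonIdx n d, monExp σ = m := by
  refine ⟨⟨Finsupp.toMultiset m, ?_⟩, ?_⟩
  · rw [Finsupp.card_toMultiset, ← h]; rfl
  · simp [monExp]

lemma monomial_monExp {T : Type*} [CommRing T] {n d : ℕ} (σ : MonIdx n d) (c : T) :
    MvPolynomial.monomial (monExp σ) c =
      MvPolynomial.C c * monVal (MvPolynomial.X : Fin n → MvPolynomial (Fin n) T) σ := by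
  rw [MvPolynomial.monomial_eq, Finsupp.prod_fintype _ _ (by simp)]
  rfl

lemma expand_form {T : Type*} [CommRing T] {n d : ℕ} (f : MvPolynomial (Fin n) T)
    (hf : f.IsHomogeneous d) :
    f = ∑ σ : MonIdx n d, MvPolynomial.C (MvPolynomial.coeff (monExp σ) f) *
      monVal (MvPolynomial.X : Fin n → MvPolynomial (Fin n) T) σ := by
  simp_rw [← monomial_monExp]
  ext m
  rw [MvPolynomial.coeff_sum]
  simp_rw [MvPolynomial.coeff_monomial]
  by_cases hm : m.degree = d
  · obtain ⟨σ, rfl⟩ := exists_monExp m hm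
    rw [Finset.sum_eq_single σ]
    · simp
    · intro b _ hb
      rw [if_neg]
      exact fun h => hb (monExp_injective h)
    · simp
  · rw [hf.coeff_eq_zero hm, Finset.sum_eq_zero]
    intro σ _
    rw [if_neg]
    rintro rfl
    apply hm
    rw [Finsupp.degree_eq_sum]
    exact monExp_sum σ

lemma linForm_homog {T : Type*} [CommRing T] {n : ℕ} (A : Matrix (Fin n) (Fin n) T) (j : Fin n) :
    (linForm A j).IsHomogeneous 1 := by
  apply MvPolynomial.IsHomogeneous.sum
  intro k _
  simpa using (MvPolynomial.isHomogeneous_C (Fin n) (A j k)).mul (MvPolynomial.isHomogeneous_X T k)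

lemma monVal_linForm_homog {T : Type*} [CommRing T] {n d : ℕ} (A : Matrix (Fin n) (Fin n) T)
    (τ : MonIdx n d) : (monVal (linForm A) τ).IsHomogeneous d := by
  have h := MvPolynomial.IsHomogeneous.prod Finset.univ
    (fun j => linForm A j ^ (monExp τ j)) (fun j => 1 * monExp τ j)
    (fun j _ => (linForm_homog A j).pow _)
  simp only [one_mul, monExp_sum] at h
  exact h

lemma map_monVal {T T' : Type*} [CommRing T] [CommRing T'] {n d : ℕ} (f : T →+* T')
    (y : Fin n → T) (τ : MonIdx n d) : f (monVal y τ) = monVal (fun i => f (y i)) τ := by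
  simp [monVal]

lemma symPow_mul {T : Type*} [CommRing T] {n : ℕ} (d : ℕ) (A B : Matrix (Fin n) (Fin n) T) :
    symPow d (A * B) = symPow d A * symPow d B := by
  ext τ σ
  let φ : MvPolynomial (Fin n) T →ₐ[T] MvPolynomial (Fin n) T := MvPolynomial.aeval (linForm B)
  have h1 : ∀ j, φ (linForm A j) = linForm (A * B) j := by
    intro j
    simp only [linForm, map_sum, map_mul, φ, MvPolynomial.aeval_C, MvPolynomial.aeval_X,
      MvPolynomial.algebraMap_eq, Matrix.mul_apply, Finset.mul_sum, Finset.sum_mul, mul_assoc]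
    rw [Finset.sum_comm]
  have h2 : monVal (linForm (A * B)) τ = φ (monVal (linForm A) τ) := by
    have := map_monVal φ.toRingHom (linForm A) τ
    simp only [AlgHom.toRingHom_eq_coe, RingHom.coe_coe, h1] at this
    exact this.symm
  have h3 : ∀ ρ : MonIdx n d, φ (monVal MvPolynomial.X ρ) = monVal (linForm B) ρ := by
    intro ρ
    have := map_monVal φ.toRingHom (MvPolynomial.X) ρ
    simpa [φ] using this
  rw [symPow_apply, h2, expand_form _ (monVal_linForm_homog A τ), map_sum, MvPolynomial.coeff_sum,
    Matrix.mul_apply]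
  refine Finset.sum_congr rfl fun ρ _ => ?_
  rw [map_mul, h3, symPow_apply, symPow_apply]
  simp [φ, MvPolynomial.algebraMap_eq, MvPolynomial.coeff_C_mul]

lemma symPow_map {T T' : Type*} [CommRing T] [CommRing T'] {n : ℕ} (d : ℕ) (f : T →+* T')
    (A : Matrix (Fin n) (Fin n) T) : (symPow d A).map f = symPow d (A.map f) := by
  ext τ σ
  rw [Matrix.map_apply, symPow_apply, symPow_apply, ← MvPolynomial.coeff_map, map_monVal]
  congr 2
  ext i : 1
  simp [linForm]

lemma symPow_diagonal {T : Type*} [CommRing T] {n : ℕ} (d : ℕ) (x : Fin n → T) :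
    symPow d (Matrix.diagonal x) = Matrix.diagonal (fun τ => monVal x τ) := by
  ext τ σ
  have h : ∀ j, linForm (Matrix.diagonal x) j = MvPolynomial.C (x j) * MvPolynomial.X j := by
    intro j
    rw [linForm, Finset.sum_eq_single j]
    · simp
    · intro b _ hb; simp [Matrix.diagonal_apply_ne _ hb.symm]
    · simp
  have h2 : monVal (linForm (Matrix.diagonal x)) τ =
      MvPolynomial.monomial (monExp τ) (monVal x τ) := by
    rw [monomial_monExp]
    simp only [monVal, h, mul_pow, Finset.prod_mul_distrib, map_prod, map_pow]
  rw [symPow_apply, h2, MvPolynomial.coeff_monomial, Matrix.diagonal_apply]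
  simp [monExp_injective.eq_iff]

lemma symPow_scalar_det {T : Type*} [CommRing T] {n : ℕ} (d : ℕ) (δ : T) :
    (symPow d (δ • (1 : Matrix (Fin n) (Fin n) T))).det =
      δ ^ (d * Fintype.card (MonIdx n d)) := by
  rw [Matrix.smul_one_eq_diagonal, symPow_diagonal, Matrix.det_diagonal]
  simp [monVal, Finset.prod_pow_eq_pow_sum, monExp_sum, pow_mul]

lemma symPow_det_dvd {T : Type*} [CommRing T] {n : ℕ} (d : ℕ) (A : Matrix (Fin n) (Fin n) T) :
    (symPow d A).det ∣ A.det ^ (d * Fintype.card (MonIdx n d)) := by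
  rw [← symPow_scalar_det, ← Matrix.mul_adjugate, symPow_mul, Matrix.det_mul]
  exact dvd_mul_right _ _

/-! ## Kalman matrices over general rings -/

/-- The matrix with rows `c M^i`. -/
def kal {T : Type*} [CommRing T] {ι : Type*} [Fintype ι] [DecidableEq ι]
    (c : ι → T) (M : Matrix ι ι T) : Matrix ι ι T :=
  Matrix.of fun σ => Matrix.vecMul c (M ^ ((Fintype.equivFin ι) σ : ℕ))

lemma kalmanSq_eq {n : ℕ} (d : ℕ) (c : MonIdx n d → ℂ) :
    kalmanSq d c = kal (fun κ => MvPolynomial.C (c κ)) (symPow d (genMat n)) := by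
  ext σ τ
  simp [kalmanSq, kal, Matrix.vecMul, dotProduct]

lemma kal_mul {T : Type*} [CommRing T] {ι : Type*} [Fintype ι] [DecidableEq ι]
    (c : ι → T) (M N M' : Matrix ι ι T) (h : M * N = N * M') :
    kal c M * N = kal (Matrix.vecMul c N) M' := by
  have hp : ∀ i : ℕ, M ^ i * N = N * M' ^ i := by
    intro i
    induction i with
    | zero => simp
    | succ i ih => rw [pow_succ, mul_assoc, h, ← mul_assoc, ih, mul_assoc, ← pow_succ]
  ext σ τ
  have : (kal c M * N) σ = Matrix.vecMul (kal c M σ) N := by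
    ext τ; rfl
  have h2 : kal c M σ = Matrix.vecMul c (M ^ ((Fintype.equivFin ι) σ : ℕ)) := rfl
  rw [this, h2, Matrix.vecMul_vecMul, hp, ← Matrix.vecMul_vecMul]
  rfl

lemma kal_map {T T' : Type*} [CommRing T] [CommRing T'] {ι : Type*} [Fintype ι] [DecidableEq ι]
    (f : T →+* T') (c : ι → T) (M : Matrix ι ι T) :
    (kal c M).map f = kal (fun i => f (c i)) (M.map f) := by
  ext σ τ
  have : (M.map f) ^ ((Fintype.equivFin ι) σ : ℕ) = (M ^ ((Fintype.equivFin ι) σ : ℕ)).map f := by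
    simpa using (map_pow f.mapMatrix M ((Fintype.equivFin ι) σ : ℕ)).symm
  simp [kal, this, Matrix.vecMul, dotProduct]

/-- Vandermonde-type determinant on an arbitrary finite index set. -/
def vdm {T : Type*} [CommRing T] {ι : Type*} [Fintype ι] [DecidableEq ι] (v : ι → T) : T :=
  (Matrix.of fun σ τ : ι => v τ ^ ((Fintype.equivFin ι) σ : ℕ)).det

lemma kal_diagonal_det {T : Type*} [CommRing T] {ι : Type*} [Fintype ι] [DecidableEq ι]
    (c v : ι → T) : (kal c (Matrix.diagonal v)).det = (∏ i, c i) * vdm v := by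
  rw [vdm, ← Matrix.det_mul_row]
  congr 1
  ext σ τ
  simp [kal, Matrix.diagonal_pow, Matrix.vecMul_diagonal]

lemma map_vdm {T T' : Type*} [CommRing T] [CommRing T'] {ι : Type*} [Fintype ι] [DecidableEq ι]
    (f : T →+* T') (v : ι → T) : f (vdm v) = vdm (fun i => f (v i)) := by
  rw [vdm, RingHom.map_det]
  congr 1
  ext i j
  simp

lemma vdm_perm {T : Type*} [CommRing T] {ι : Type*} [Fintype ι] [DecidableEq ι] (v : ι → T)
    (e : Equiv.Perm ι) : vdm (fun i => v (e i)) = vdm v ∨ vdm (fun i => v (e i)) = - vdm v := by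
  have h := Matrix.det_permute' e (Matrix.of fun σ τ : ι => v τ ^ ((Fintype.equivFin ι) σ : ℕ))
  have h2 : vdm (fun i => v (e i)) = ((Equiv.Perm.sign e : ℤ) : T) * vdm v := h
  rcases Int.units_eq_one_or (Equiv.Perm.sign e) with h3 | h3 <;> rw [h3] at h2 <;> simp [h2]

lemma vdm_eq {T : Type*} [CommRing T] {ι : Type*} [Fintype ι] [DecidableEq ι] (v : ι → T) :
    vdm v = (Matrix.vandermonde (fun i => v ((Fintype.equivFin ι).symm i))).det := by
  rw [vdm, ← Matrix.det_transpose, ← Matrix.det_reindex_self (Fintype.equivFin ι)]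
  congr 1
  ext i j
  simp



/-! ## Divisibility by differences of variables -/

lemma sub_rename_dvd {T : Type*} [CommRing T] {n : ℕ} (i j : Fin n)
    (p : MvPolynomial (Fin n) T) :
    (MvPolynomial.X i - MvPolynomial.X j) ∣
      p - MvPolynomial.rename (Function.update id j i) p := by
  induction p using MvPolynomial.induction_on with
  | C a => simp
  | add p q hp hq =>
    rw [map_add, add_sub_add_comm]
    exact dvd_add hp hq
  | mul_X p k hp =>
    rw [map_mul, MvPolynomial.rename_X]
    have h : (MvPolynomial.X i - MvPolynomial.X j : MvPolynomial (Fin n) T) ∣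
        MvPolynomial.X k - MvPolynomial.X (Function.update id j i k) := by
      by_cases hk : k = j
      · subst hk
        rw [Function.update_self, ← neg_sub, neg_dvd]
      · simp [Function.update_of_ne hk]
    set r := MvPolynomial.rename (Function.update id j i) p
    have : p * MvPolynomial.X k - r * MvPolynomial.X (Function.update id j i k) =
        (p - r) * MvPolynomial.X k +
          r * (MvPolynomial.X k - MvPolynomial.X (Function.update id j i k)) := by ring
    rw [this]
    exact dvd_add (hp.mul_right _) (h.mul_left _)

lemma X_sub_X_dvd_iff {T : Type*} [CommRing T] {n : ℕ} (i j : Fin n)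
    (p : MvPolynomial (Fin n) T) :
    (MvPolynomial.X i - MvPolynomial.X j) ∣ p ↔
      MvPolynomial.rename (Function.update id j i) p = 0 := by
  constructor
  · rintro ⟨q, rfl⟩
    by_cases h : i = j
    · subst h; simp
    · rw [map_mul, map_sub, MvPolynomial.rename_X, MvPolynomial.rename_X,
        Function.update_self, Function.update_of_ne h]
      simp
  · intro h
    have := sub_rename_dvd i j p
    rwa [h, sub_zero] at this

lemma X_sub_X_prime {T : Type*} [CommRing T] [IsDomain T] {n : ℕ} {i j : Fin n} (hij : i ≠ j) :
    Prime (MvPolynomial.X i - MvPolynomial.X j : MvPolynomial (Fin n) T) := by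
  refine ⟨?_, ?_, ?_⟩
  · rw [sub_ne_zero]
    exact fun h => hij (MvPolynomial.X_injective h)
  · intro h
    rw [isUnit_iff_dvd_one, X_sub_X_dvd_iff] at h
    simp at h
  · intro a b h
    rw [X_sub_X_dvd_iff, map_mul, mul_eq_zero] at h
    rwa [X_sub_X_dvd_iff, X_sub_X_dvd_iff]

/-- The Vandermonde polynomial. -/
def vdX (n : ℕ) (T : Type*) [CommRing T] : MvPolynomial (Fin n) T :=
  (Matrix.vandermonde (MvPolynomial.X : Fin n → MvPolynomial (Fin n) T)).det

lemma vdX_eq_prod (n : ℕ) (T : Type*) [CommRing T] :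
    vdX n T = ∏ p ∈ (Finset.univ : Finset (Fin n)).sigma (fun i => Finset.Ioi i),
      (MvPolynomial.X p.2 - MvPolynomial.X p.1) := by
  rw [vdX, Matrix.det_vandermonde, Finset.prod_sigma]

lemma isRelPrime_vdX {T : Type*} [CommRing T] [IsDomain T] [UniqueFactorizationMonoid T] {n : ℕ}
    (P : MvPolynomial (Fin n) T)
    (h : ∀ i j, i ≠ j → ¬ (MvPolynomial.X i - MvPolynomial.X j) ∣ P) :
    IsRelPrime P (vdX n T) := by
  rw [vdX_eq_prod]
  apply IsRelPrime.prod_right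
  intro p hp
  simp only [Finset.mem_sigma, Finset.mem_univ, Finset.mem_Ioi, true_and] at hp
  have := (X_sub_X_prime (T := T) hp.ne').irreducible
  exact (this.isRelPrime_iff_not_dvd.2 (h _ _ hp.ne')).symm

lemma vdX_dvd {T : Type*} [CommRing T] [IsDomain T] [UniqueFactorizationMonoid T] {n : ℕ}
    (P : MvPolynomial (Fin n) T)
    (h : ∀ i j, i ≠ j → (MvPolynomial.X i - MvPolynomial.X j) ∣ P) : vdX n T ∣ P := by
  rw [vdX_eq_prod]
  apply Finset.prod_dvd_of_isRelPrime
  · rintro ⟨i, j⟩ hp ⟨k, l⟩ hq hne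
    simp only [Finset.coe_sigma, Set.mem_sigma_iff, Finset.coe_univ, Set.mem_univ, true_and,
      Finset.coe_Ioi, Set.mem_Ioi] at hp hq
    have := (X_sub_X_prime (T := T) hp.ne').irreducible
    refine this.isRelPrime_iff_not_dvd.2 ?_
    rw [X_sub_X_dvd_iff, map_sub, MvPolynomial.rename_X, MvPolynomial.rename_X, sub_eq_zero]
    intro h
    have h2 := MvPolynomial.X_injective h
    simp only [Function.update_apply, id] at h2
    apply hne
    split_ifs at h2 <;> subst_vars <;> first | rfl | (exfalso; order)
  · rintro ⟨i, j⟩ hp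
    simp only [Finset.mem_sigma, Finset.mem_univ, Finset.mem_Ioi, true_and] at hp
    exact h _ _ hp.ne'

lemma vdX_rename {n : ℕ} {T : Type*} [CommRing T] (e : Equiv.Perm (Fin n)) :
    MvPolynomial.rename e (vdX n T) = vdX n T ∨ MvPolynomial.rename e (vdX n T) = - vdX n T := by
  have h := Matrix.det_permute e
    (Matrix.vandermonde (MvPolynomial.X : Fin n → MvPolynomial (Fin n) T))
  have h2 : MvPolynomial.rename e (vdX n T) = ((Equiv.Perm.sign e : ℤ) : _) * vdX n T := by
    rw [vdX, ← h, AlgHom.map_det]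
    congr 1
    ext i j : 2
    simp
  rcases Int.units_eq_one_or (Equiv.Perm.sign e) with h3 | h3 <;> rw [h3] at h2 <;> simp [h2]

lemma vdX_ne_zero {n : ℕ} {T : Type*} [CommRing T] [IsDomain T] : vdX n T ≠ 0 := by
  rw [vdX, Matrix.det_vandermonde_ne_zero_iff]
  exact MvPolynomial.X_injective

/-- The Vandermonde product of the monomials of degree `d`. -/
def bigV (n d : ℕ) (T : Type*) [CommRing T] : MvPolynomial (Fin n) T :=
  vdm (fun τ : MonIdx n d => monVal (MvPolynomial.X : Fin n → MvPolynomial (Fin n) T) τ)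

lemma monVal_perm {T : Type*} [CommRing T] {n d : ℕ} (y : Fin n → T) (e : Equiv.Perm (Fin n))
    (τ : MonIdx n d) : monVal (fun i => y (e i)) τ = monVal y (Sym.equivCongr e τ) := by
  unfold monVal
  refine Fintype.prod_equiv e _ _ fun j => ?_
  congr 1
  simp only [monExp, Multiset.toFinsupp_apply, Sym.equivCongr, Equiv.coe_fn_mk, Sym.coe_map]
  rw [Multiset.count_map_eq_count' _ _ e.injective]

lemma bigV_rename {n d : ℕ} {T : Type*} [CommRing T] (e : Equiv.Perm (Fin n)) :
    MvPolynomial.rename e (bigV n d T) = bigV n d T ∨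
      MvPolynomial.rename e (bigV n d T) = - bigV n d T := by
  have h : MvPolynomial.rename e (bigV n d T) = vdm (fun τ : MonIdx n d =>
      monVal (MvPolynomial.X : Fin n → MvPolynomial (Fin n) T) (Sym.equivCongr e τ)) := by
    have := map_vdm (MvPolynomial.rename (R := T) e).toRingHom (fun τ : MonIdx n d =>
      monVal (MvPolynomial.X : Fin n → MvPolynomial (Fin n) T) τ)
    simp only [map_monVal] at this
    rw [bigV]
    refine this.trans ?_
    congr 1
    funext τ
    rw [← monVal_perm]
    congr 1
    funext i
    simp
  rw [h]
  exact vdm_perm _ (Sym.equivCongr e)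

lemma bigV_ne_zero {n d : ℕ} {T : Type*} [CommRing T] [IsDomain T] : bigV n d T ≠ 0 := by
  rw [bigV, vdm_eq, Matrix.det_vandermonde_ne_zero_iff]
  intro a b h
  have h2 : ∀ σ : MonIdx n d, monVal (MvPolynomial.X : Fin n → MvPolynomial (Fin n) T) σ =
      MvPolynomial.monomial (monExp σ) 1 := fun σ => by rw [monomial_monExp]; simp
  simp only [h2] at h
  have h3 := MvPolynomial.monomial_left_injective (one_ne_zero) h
  exact (Fintype.equivFin _).symm.injective (monExp_injective h3)

lemma exists_perm {n : ℕ} {i j k l : Fin n} (hij : i ≠ j) (hkl : k ≠ l) :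
    ∃ e : Equiv.Perm (Fin n), e i = k ∧ e j = l := by
  refine ⟨(Equiv.swap i k).trans (Equiv.swap (Equiv.swap i k j) l), ?_, ?_⟩
  · simp only [Equiv.trans_apply, Equiv.swap_apply_left]
    apply Equiv.swap_apply_of_ne_of_ne _ hkl
    intro h
    apply hij
    have := congrArg (Equiv.swap i k) h
    simpa using this
  · simp

lemma exists_symmetric_factor (n d : ℕ) : ∃ (m : ℕ) (P : MvPolynomial (Fin n) ℂ),
    bigV n d ℂ = vdX n ℂ ^ m * P ∧ P.IsSymmetric ∧
      ∀ i j, i ≠ j → ¬ (MvPolynomial.X i - MvPolynomial.X j) ∣ P := by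
  have key : ∀ (m : ℕ) (P : MvPolynomial (Fin n) ℂ), bigV n d ℂ = vdX n ℂ ^ m * P →
      ∀ e : Equiv.Perm (Fin n), MvPolynomial.rename e P = P ∨ MvPolynomial.rename e P = -P := by
    intro m P h e
    have h1 := congrArg (MvPolynomial.rename e) h
    rw [map_mul, map_pow] at h1
    have hV : (vdX n ℂ) ^ m ≠ 0 := pow_ne_zero _ vdX_ne_zero
    have h3 : (MvPolynomial.rename e P) ^ 2 = P ^ 2 := by
      have h4 : (MvPolynomial.rename e (bigV n d ℂ)) ^ 2 = (bigV n d ℂ) ^ 2 := by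
        rcases bigV_rename (n := n) (d := d) (T := ℂ) e with h | h <;> rw [h]; ring
      have h5 : (MvPolynomial.rename e (vdX n ℂ)) ^ 2 = (vdX n ℂ) ^ 2 := by
        rcases vdX_rename (n := n) (T := ℂ) e with h | h <;> rw [h]; ring
      rw [h1, h, mul_pow, mul_pow, ← pow_mul, mul_comm m, pow_mul, h5, ← pow_mul,
        mul_comm 2, pow_mul] at h4
      exact mul_left_cancel₀ (pow_ne_zero 2 hV) h4
    exact sq_eq_sq_iff_eq_or_eq_neg.1 h3
  obtain ⟨m, P, hP, hnd⟩ : ∃ (m : ℕ) (P : MvPolynomial (Fin n) ℂ),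
    bigV n d ℂ = vdX n ℂ ^ m * P ∧
      ∀ i j, i ≠ j → ¬ (MvPolynomial.X i - MvPolynomial.X j) ∣ P := by
    by_cases hn : ∃ i j : Fin n, i ≠ j
    · obtain ⟨i₀, j₀, hij₀⟩ := hn
      have hu : ¬ IsUnit (vdX n ℂ) := by
        intro hu
        have hd : (MvPolynomial.X i₀ - MvPolynomial.X j₀) ∣ vdX n ℂ := by
          rw [X_sub_X_dvd_iff, vdX, AlgHom.map_det]
          apply Matrix.det_zero_of_row_eq hij₀
          funext k
          simp [Function.update_of_ne hij₀]
        exact (X_sub_X_prime (T := ℂ) hij₀).not_isUnit (isUnit_of_dvd_unit hd hu)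
      obtain ⟨m, P, h1, h2⟩ := WfDvdMonoid.max_power_factor' (bigV_ne_zero (n := n) (d := d)) hu
      refine ⟨m, P, h2, ?_⟩
      intro i j hij hdv
      apply h1
      apply vdX_dvd
      intro k l hkl
      obtain ⟨e, rfl, rfl⟩ := exists_perm hij hkl
      have h3 := map_dvd (MvPolynomial.rename (R := ℂ) e) hdv
      rw [map_sub, MvPolynomial.rename_X, MvPolynomial.rename_X] at h3
      rcases key m P h2 e with h | h <;> rw [h] at h3
      · exact h3
      · exact (dvd_neg).1 h3
    · refine ⟨0, bigV n d ℂ, by simp, ?_⟩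
      intro i j hij
      exact absurd ⟨i, j, hij⟩ hn
  refine ⟨m, P, hP, ?_, hnd⟩
  intro e
  induction e using Equiv.Perm.swap_induction_on with
  | one => 
    have : (⇑(1 : Equiv.Perm (Fin n))) = id := rfl
    rw [this, MvPolynomial.rename_id_apply]
  | swap_mul f i j hij ih =>
    rw [Equiv.Perm.coe_mul, ← MvPolynomial.rename_rename, ih]
    rcases key m P hP (Equiv.swap i j) with h | h
    · exact h
    · exfalso
      apply hnd i j hij
      rw [X_sub_X_dvd_iff]
      have h2 := congrArg (MvPolynomial.rename (Function.update id j i)) h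
      rw [MvPolynomial.rename_rename, map_neg] at h2
      have h3 : (Function.update id j i) ∘ (Equiv.swap i j) = Function.update id j i := by
        funext k
        simp only [Function.comp_apply, Function.update_apply, id, Equiv.swap_apply_def]
        split_ifs <;> simp_all
      rw [h3] at h2
      exact self_eq_neg.1 h2



/-! ## Characteristic coefficients, companion and Krylov matrices -/

/-- The signed coefficients of the characteristic polynomial (elementary symmetric functions of
the eigenvalues). -/
def cpar {T : Type*} [CommRing T] {n : ℕ} (B : Matrix (Fin n) (Fin n) T) : Fin n → T :=
  fun i => (-1) ^ ((i : ℕ) + 1) * B.charpoly.coeff (n - (i + 1))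

lemma cpar_map {T T' : Type*} [CommRing T] [CommRing T'] {n : ℕ} (f : T →+* T')
    (B : Matrix (Fin n) (Fin n) T) (i : Fin n) : f (cpar B i) = cpar (B.map f) i := by
  simp [cpar, Matrix.charpoly_map]

/-- The coefficients of the monic polynomial with given elementary symmetric functions. -/
def acoef {T : Type*} [CommRing T] {n : ℕ} (e : Fin n → T) : Fin n → T :=
  fun j => (-1) ^ (n - (j : ℕ)) * e (Fin.rev j)

lemma acoef_cpar {T : Type*} [CommRing T] {n : ℕ} (B : Matrix (Fin n) (Fin n) T) (j : Fin n) :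
    acoef (cpar B) j = B.charpoly.coeff j := by
  have hj := j.isLt
  have h1 : ((Fin.rev j : Fin n) : ℕ) + 1 = n - j := by rw [Fin.val_rev]; omega
  have h2 : n - (n - (j : ℕ)) = j := by omega
  simp only [acoef, cpar, h1, h2]
  rw [← mul_assoc, ← pow_add, ← two_mul, pow_mul]
  simp

lemma cpar_of_charpoly {T : Type*} [CommRing T] {n : ℕ} (K : Type*) [CommRing K] [Algebra K T]
    (B : Matrix (Fin n) (Fin n) T) (y : Fin n → T)
    (h : B.charpoly = ∏ i, (Polynomial.X - Polynomial.C (y i))) (i : Fin n) :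
    cpar B i = MvPolynomial.aeval y (MvPolynomial.esymm (Fin n) K (i + 1)) := by
  have hi := i.isLt
  have h1 := Multiset.prod_X_sub_C_coeff (Finset.univ.val.map y) (k := n - (i + 1)) (by simp)
  rw [Multiset.map_map] at h1
  have h2 : (Multiset.map ((fun t => Polynomial.X - Polynomial.C t) ∘ y) Finset.univ.val).prod =
    B.charpoly := by rw [h]; rfl
  have h3 : n - (n - ((i : ℕ) + 1)) = i + 1 := by omega
  rw [h2] at h1
  simp only [Multiset.card_map, Finset.card_val, Finset.card_univ, Fintype.card_fin, h3] at h1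
  rw [cpar, h1, MvPolynomial.aeval_esymm_eq_multiset_esymm, ← mul_assoc, ← pow_add, ← two_mul,
    pow_mul]
  simp

lemma aeval_cpar {T : Type*} [CommRing T] {n : ℕ} {K : Type*} [CommRing K] [Algebra K T]
    (B : Matrix (Fin n) (Fin n) T) (y : Fin n → T)
    (h : B.charpoly = ∏ i, (Polynomial.X - Polynomial.C (y i))) (G : MvPolynomial (Fin n) K) :
    MvPolynomial.aeval (cpar B) G = MvPolynomial.aeval y
      (MvPolynomial.aeval (fun i : Fin n => MvPolynomial.esymm (Fin n) K (i + 1)) G) := by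
  have : (MvPolynomial.aeval (cpar B) : MvPolynomial (Fin n) K →ₐ[K] T) =
      (MvPolynomial.aeval y).comp
      (MvPolynomial.aeval (fun i : Fin n => MvPolynomial.esymm (Fin n) K (i + 1))) := by
    apply MvPolynomial.algHom_ext
    intro i
    simp [cpar_of_charpoly K B y h]
  rw [this]; rfl

/-- Companion matrix. -/
def compMat {T : Type*} [CommRing T] {n : ℕ} (a : Fin n → T) : Matrix (Fin n) (Fin n) T :=
  Matrix.of fun i j => if (j : ℕ) + 1 = n then - a i else if (i : ℕ) = j + 1 then 1 else 0

lemma mul_compMat {T : Type*} [CommRing T] {n : ℕ} (a : Fin n → T) (s : Fin n → ℕ → T)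
    (h : ∀ i, s i n = - ∑ j : Fin n, a j * s i j) :
    (Matrix.of fun (i j : Fin n) => s i j) * compMat a = Matrix.of fun i j : Fin n => s i (j + 1) := by
  ext i j
  rw [Matrix.mul_apply]
  simp only [Matrix.of_apply, compMat]
  by_cases hj : (j : ℕ) + 1 = n
  · simp only [hj, if_true, h, ← Finset.sum_neg_distrib]
    exact Finset.sum_congr rfl fun k _ => by ring
  · have hj2 : (j : ℕ) + 1 < n := by have := j.isLt; omega
    simp only [hj, if_false]
    rw [Finset.sum_eq_single (⟨j + 1, hj2⟩ : Fin n)]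
    · simp
    · intro b _ hb
      rw [if_neg, mul_zero]
      exact fun h => hb (Fin.ext h)
    · simp

lemma compMat_map {T T' : Type*} [CommRing T] [CommRing T'] {n : ℕ} (f : T →+* T') (e : Fin n → T) :
    (compMat (acoef e)).map f = compMat (acoef fun i => f (e i)) := by
  ext i j
  simp only [compMat, Matrix.map_apply, Matrix.of_apply, acoef]
  split_ifs <;> simp

/-- Krylov matrix with respect to the all-ones vector. -/
def kry {T : Type*} [CommRing T] {n : ℕ} (B : Matrix (Fin n) (Fin n) T) :
    Matrix (Fin n) (Fin n) T :=
  Matrix.of fun i j => ((B ^ (j : ℕ)).mulVec 1) i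

lemma kry_map {T T' : Type*} [CommRing T] [CommRing T'] {n : ℕ} (f : T →+* T')
    (B : Matrix (Fin n) (Fin n) T) : (kry B).map f = kry (B.map f) := by
  ext i j
  have : (B.map f) ^ (j : ℕ) = (B ^ (j : ℕ)).map f := by
    simpa using (map_pow f.mapMatrix B (j : ℕ)).symm
  simp [kry, this, Matrix.mulVec, dotProduct]

lemma pow_eq_neg_sum {T : Type*} [CommRing T] [Nontrivial T] {n : ℕ}
    (B : Matrix (Fin n) (Fin n) T) :
    B ^ n = - ∑ j : Fin n, B.charpoly.coeff j • B ^ (j : ℕ) := by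
  have h := Matrix.aeval_self_charpoly B
  rw [Polynomial.aeval_eq_sum_range, Matrix.charpoly_natDegree_eq_dim, Fintype.card_fin,
    Finset.sum_range_succ] at h
  have h1 : B.charpoly.coeff n = 1 := by
    have := B.charpoly_monic.coeff_natDegree
    rwa [Matrix.charpoly_natDegree_eq_dim, Fintype.card_fin] at this
  rw [h1, one_smul, add_comm] at h
  rw [eq_neg_of_add_eq_zero_left h, Finset.sum_range]

lemma mul_kry {T : Type*} [CommRing T] [Nontrivial T] {n : ℕ} (B : Matrix (Fin n) (Fin n) T) :
    B * kry B = kry B * compMat (acoef (cpar B)) := by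
  have h := mul_compMat (acoef (cpar B)) (fun i j => ((B ^ j).mulVec 1) i) (by
    intro i
    simp only [acoef_cpar]
    rw [pow_eq_neg_sum B, Matrix.neg_mulVec, Pi.neg_apply, Matrix.sum_mulVec, Finset.sum_apply]
    simp [Matrix.smul_mulVec])
  have h2 : kry B * compMat (acoef (cpar B)) = Matrix.of fun i j : Fin n =>
    ((B ^ ((j : ℕ) + 1)).mulVec 1) i := h
  rw [h2]
  ext i j
  simp only [Matrix.of_apply, pow_succ']
  rw [← Matrix.mulVec_mulVec]
  rfl

lemma kry_diagonal {T : Type*} [CommRing T] {n : ℕ} (x : Fin n → T) :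
    kry (Matrix.diagonal x) = Matrix.vandermonde x := by
  ext i j
  simp [kry, Matrix.diagonal_pow, Matrix.mulVec_diagonal]

lemma cmp_mul_adj {T : Type*} [CommRing T] [IsDomain T] {n : ℕ} (x : Fin n → T)
    (hx : Function.Injective x) :
    compMat (acoef (cpar (Matrix.diagonal x))) * (Matrix.vandermonde x).adjugate =
      (Matrix.vandermonde x).adjugate * Matrix.diagonal x := by
  have h := mul_kry (Matrix.diagonal x)
  rw [kry_diagonal] at h
  set V := Matrix.vandermonde x
  set Co := compMat (acoef (cpar (Matrix.diagonal x)))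
  have h1 : V.det • (Co * V.adjugate) = V.det • (V.adjugate * Matrix.diagonal x) := by
    have e1 : V.adjugate * (V * Co) * V.adjugate = V.det • (Co * V.adjugate) := by
      rw [← mul_assoc, Matrix.adjugate_mul, Matrix.smul_mul, Matrix.one_mul, Matrix.smul_mul]
    have e2 : V.adjugate * (Matrix.diagonal x * V) * V.adjugate =
        V.det • (V.adjugate * Matrix.diagonal x) := by
      rw [mul_assoc, mul_assoc, Matrix.mul_adjugate, Matrix.mul_smul, Matrix.mul_smul, mul_one]
    rw [← e1, ← e2, h]
  have hd : V.det ≠ 0 := Matrix.det_vandermonde_ne_zero_iff.2 hx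
  ext i j
  have := congrFun (congrFun h1 i) j
  simp only [Matrix.smul_apply, smul_eq_mul] at this
  exact mul_left_cancel₀ hd this

/-! ## The divisibility statement -/

/-- The conjugation-invariant polynomial on matrices attached to `G`. -/
def invPoly (n : ℕ) (G : MvPolynomial (Fin n) ℂ) : MvPolynomial (Fin n × Fin n) ℂ :=
  MvPolynomial.aeval (cpar (genMat n)) G

lemma map_bigV {n d : ℕ} {T T' : Type*} [CommRing T] [CommRing T'] (f : T →+* T') :
    MvPolynomial.map f (bigV n d T) = bigV n d T' := by
  rw [bigV, map_vdm]
  simp only [map_monVal, MvPolynomial.map_X]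
  rfl

lemma map_vdX {n : ℕ} {T T' : Type*} [CommRing T] [CommRing T'] (f : T →+* T') :
    MvPolynomial.map f (vdX n T) = vdX n T' := by
  rw [vdX, RingHom.map_det]
  congr 1
  ext i j : 2
  simp

lemma map_kal_comp {T T' : Type*} [CommRing T] [CommRing T'] {n d : ℕ} (f : T →+* T')
    (c : MonIdx n d → T) (e : Fin n → T) (c' : MonIdx n d → T') (e' : Fin n → T')
    (hc : ∀ i, f (c i) = c' i) (he : ∀ i, f (e i) = e' i) :
    f (kal c (symPow d (compMat (acoef e)))).det =
      (kal c' (symPow d (compMat (acoef e')))).det := by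
  rw [RingHom.map_det, RingHom.mapMatrix_apply, kal_map, symPow_map, compMat_map]
  rw [funext hc, funext he]

set_option maxHeartbeats 1000000 in
lemma inv_dvd_mul (n d m : ℕ) (P G : MvPolynomial (Fin n) ℂ)
    (hV : bigV n d ℂ = vdX n ℂ ^ m * P) (hsym : P.IsSymmetric)
    (hnd : ∀ i j, i ≠ j → ¬ (MvPolynomial.X i - MvPolynomial.X j) ∣ P)
    (hG : MvPolynomial.aeval (fun i : Fin n => MvPolynomial.esymm (Fin n) ℂ (i + 1)) G = P)
    (c : MonIdx n d → ℂ) :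
    invPoly n G ∣ kalmanDet d c * (symPow d (kry (genMat n))).det := by
  let R := MvPolynomial (Fin n × Fin n) ℂ
  let A : Matrix (Fin n) (Fin n) R := genMat n
  let W := kry A
  let ct : MonIdx n d → R := fun κ => MvPolynomial.C (c κ)
  let c' : MonIdx n d → R := Matrix.vecMul ct (symPow d W)
  let F : MvPolynomial (Fin n) R :=
    (kal (fun σ => MvPolynomial.C (c' σ)) (symPow d (compMat (acoef MvPolynomial.X)))).det
  let ψ : MvPolynomial (Fin n) R →ₐ[R] R := MvPolynomial.aeval (cpar A)
  let θ : MvPolynomial (Fin n) R →ₐ[R] MvPolynomial (Fin n) R :=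
    MvPolynomial.aeval (fun i : Fin n => MvPolynomial.esymm (Fin n) R (i + 1))
  -- specialization to the generic matrix
  have hψF : ψ F = kalmanDet d c * (symPow d W).det := by
    have h1 : ψ F = (kal c' (symPow d (compMat (acoef (cpar A))))).det := by
      exact map_kal_comp ψ.toRingHom _ _ _ _ (fun i => MvPolynomial.aeval_C _ _)
        (fun i => MvPolynomial.aeval_X _ _)
    rw [h1, kalmanDet, kalmanSq_eq, ← Matrix.det_mul, kal_mul]
    rw [← symPow_mul, ← symPow_mul, mul_kry]
  let x : Fin n → MvPolynomial (Fin n) R := MvPolynomial.X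
  have hxinj : Function.Injective x := MvPolynomial.X_injective
  have hesymm : ∀ i, cpar (Matrix.diagonal x) i = MvPolynomial.esymm (Fin n) R (i + 1) := by
    intro i
    rw [cpar_of_charpoly R (Matrix.diagonal x) x (Matrix.charpoly_diagonal x)]
    exact MvPolynomial.aeval_X_left_apply _
  -- specialization to the universal split case
  let E := (Matrix.vandermonde x).adjugate
  let PR : MvPolynomial (Fin n) R := MvPolynomial.map MvPolynomial.C P
  have hθF : PR ∣ θ F * (symPow d E).det := by
    have h1 : θ F = (kal (fun σ => MvPolynomial.C (c' σ))
        (symPow d (compMat (acoef (cpar (Matrix.diagonal x)))))).det := by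
      exact map_kal_comp θ.toRingHom _ _ _ _ (fun i => MvPolynomial.aeval_C _ _)
        (fun i => (MvPolynomial.aeval_X _ _).trans (hesymm i).symm)
    have h2 := kal_mul (fun σ => (MvPolynomial.C (c' σ) : MvPolynomial (Fin n) R))
      (symPow d (compMat (acoef (cpar (Matrix.diagonal x))))) (symPow d E)
      (symPow d (Matrix.diagonal x))
      (by rw [← symPow_mul, ← symPow_mul, cmp_mul_adj x hxinj])
    rw [h1, ← Matrix.det_mul, h2, symPow_diagonal, kal_diagonal_det]
    have h3 : vdm (fun τ : MonIdx n d => monVal x τ) =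
        MvPolynomial.map MvPolynomial.C (bigV n d ℂ) := by rw [map_bigV]; rfl
    rw [h3, hV, map_mul]
    exact (dvd_mul_left _ _).mul_left _
  have hndR : ∀ i j, i ≠ j → ¬ (MvPolynomial.X i - MvPolynomial.X j) ∣ PR := by
    intro i j hij h
    apply hnd i j hij
    rw [X_sub_X_dvd_iff] at h ⊢
    rw [← MvPolynomial.map_rename] at h
    exact (MvPolynomial.map_injective _ (MvPolynomial.C_injective _ _)) (by rw [h, map_zero])
  have hrel : IsRelPrime PR (vdX n R) := isRelPrime_vdX PR hndR
  have hrel2 : IsRelPrime PR (symPow d E).det := by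
    refine IsRelPrime.of_dvd_right ?_ (symPow_det_dvd d E)
    rw [Matrix.det_adjugate]
    exact (hrel.pow_right).pow_right
  obtain ⟨Q, hQ⟩ := hrel2.dvd_of_dvd_mul_right hθF
  have hθsym : ∀ p, (θ p).IsSymmetric := by
    intro p
    have := (MvPolynomial.esymmAlgHom (Fin n) R n p).2
    rwa [MvPolynomial.esymmAlgHom_apply] at this
  have hθinj : Function.Injective θ := by
    intro p q h
    apply MvPolynomial.esymmAlgHom_fin_injective R (le_refl n)
    apply Subtype.ext
    rw [MvPolynomial.esymmAlgHom_apply, MvPolynomial.esymmAlgHom_apply]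
    exact h
  have hPR0 : PR ≠ 0 := by
    intro h
    have h1 : P = 0 := (MvPolynomial.map_injective _ (MvPolynomial.C_injective _ _))
      (by rw [map_zero]; exact h)
    rw [h1, mul_zero] at hV
    exact bigV_ne_zero hV
  have hQsym : Q.IsSymmetric := by
    intro e
    have h1 := hθsym F e
    rw [hQ, map_mul] at h1
    have h2 : MvPolynomial.rename e PR = PR := by
      rw [← MvPolynomial.map_rename, hsym e]
    rw [h2] at h1
    exact mul_left_cancel₀ hPR0 h1
  obtain ⟨q, hq⟩ := (MvPolynomial.esymmAlgHom_fin_bijective R n).2 ⟨Q, hQsym⟩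
  have hq' : θ q = Q := by
    have := congrArg Subtype.val hq
    rwa [MvPolynomial.esymmAlgHom_apply] at this
  have hGR : θ (MvPolynomial.map MvPolynomial.C G) = PR := by
    have : PR = MvPolynomial.map MvPolynomial.C (MvPolynomial.aeval
      (fun i : Fin n => MvPolynomial.esymm (Fin n) ℂ (i + 1)) G) := by rw [hG]
    rw [this, MvPolynomial.aeval_def, MvPolynomial.aeval_def, MvPolynomial.eval₂_map,
      MvPolynomial.eval₂_comp_left]
    congr 1
    · ext a : 1
      simp [MvPolynomial.algebraMap_eq]
    · funext i
      exact (MvPolynomial.map_esymm _ _ _ _).symm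
  have hF : F = MvPolynomial.map MvPolynomial.C G * q := by
    apply hθinj
    rw [map_mul, hGR, hq', hQ]
  have hψG : ψ (MvPolynomial.map MvPolynomial.C G) = invPoly n G := by
    rw [invPoly, MvPolynomial.aeval_def, MvPolynomial.aeval_def, MvPolynomial.eval₂_map]
    rfl
  refine ⟨ψ q, ?_⟩
  rw [← hψG, ← map_mul, ← hF, hψF]



/-! ## Discriminants as squares of Vandermonde determinants -/

lemma listPairProdSq_eq (l : List ℂ) :
    listPairProdSq l = (Matrix.vandermonde (fun i => l.get i)).det ^ 2 := by
  rw [listPairProdSq, Matrix.det_vandermonde, Finset.prod_sigma', ← Finset.prod_pow]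
  refine Finset.prod_bij' (fun p _ => ⟨p.1, p.2⟩) (fun p _ => (p.1, p.2)) ?_ ?_ ?_ ?_ ?_
  · intro p hp; simpa using hp
  · intro p hp; simpa using hp
  · intro p hp; rfl
  · intro p hp; rfl
  · intro p hp; ring

lemma vandermonde_sq_succ {k : ℕ} (w : Fin (k + 1) → ℂ) :
    (Matrix.vandermonde w).det ^ 2 =
      (∏ i : Fin k, (w i.succ - w 0) ^ 2) * (Matrix.vandermonde fun i : Fin k => w i.succ).det ^ 2 := by
  rw [Matrix.det_vandermonde, Matrix.det_vandermonde, Fin.prod_univ_succ, mul_pow]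
  congr 1
  · rw [Fin.prod_Ioi_zero, ← Finset.prod_pow]
  · congr 1
    refine Finset.prod_congr rfl fun i _ => ?_
    rw [Fin.prod_Ioi_succ]

lemma listPairProdSq_cons (a : ℂ) (l : List ℂ) :
    listPairProdSq (a :: l) = (l.map fun b => (b - a) ^ 2).prod * listPairProdSq l := by
  rw [listPairProdSq_eq, listPairProdSq_eq]
  refine (vandermonde_sq_succ (k := l.length) (fun i => (a :: l).get i)).trans ?_
  congr 1
  rw [← List.prod_ofFn]
  congr 1
  apply List.ext_get
  · simp
  · intro i h1 h2
    simp
    rfl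

lemma listPairProdSq_perm {l l' : List ℂ} (h : l.Perm l') :
    listPairProdSq l = listPairProdSq l' := by
  induction h with
  | nil => rfl
  | cons a h ih => rw [listPairProdSq_cons, listPairProdSq_cons, ih, (h.map _).prod_eq]
  | swap a b l => simp only [listPairProdSq_cons, List.map_cons, List.prod_cons]; ring
  | trans _ _ h1 h2 => rw [h1, h2]

lemma listPairProdSq_ofFn {k : ℕ} (w : Fin k → ℂ) :
    listPairProdSq (List.ofFn w) = (Matrix.vandermonde w).det ^ 2 := by
  induction k with
  | zero => rw [List.ofFn_zero, listPairProdSq_eq]; simp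
  | succ k ih =>
    rw [List.ofFn_succ, listPairProdSq_cons, ih, Matrix.det_vandermonde, Matrix.det_vandermonde,
      Fin.prod_univ_succ, mul_pow]
    congr 1
    · rw [Fin.prod_Ioi_zero, ← Finset.prod_pow, List.map_ofFn, List.prod_ofFn]
      rfl
    · congr 1
      refine Finset.prod_congr rfl fun i _ => ?_
      rw [Fin.prod_Ioi_succ]

lemma pairProdSq_fin {k : ℕ} (w : Fin k → ℂ) :
    pairProdSq (Finset.univ.val.map w) = (Matrix.vandermonde w).det ^ 2 := by
  rw [pairProdSq, ← listPairProdSq_ofFn]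
  apply listPairProdSq_perm
  rw [← Multiset.coe_eq_coe, Multiset.coe_toList]
  rw [Fin.univ_val_map]

lemma pairProdSq_fintype {ι : Type*} [Fintype ι] [DecidableEq ι] (v : ι → ℂ) :
    pairProdSq (Finset.univ.val.map v) = vdm v ^ 2 := by
  rw [vdm_eq, ← pairProdSq_fin]
  congr 1
  have h := Finset.map_univ_equiv (Fintype.equivFin ι).symm
  rw [← h, Finset.map_val, Multiset.map_map]
  rfl

lemma roots_charpoly_prod {ι : Type*} [Fintype ι] (v : ι → ℂ) :
    (∏ i, (Polynomial.X - Polynomial.C (v i))).roots = Finset.univ.val.map v := by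
  have := Polynomial.roots_multiset_prod_X_sub_C (Finset.univ.val.map v)
  rw [Multiset.map_map] at this
  exact this

/-! ## The restriction to diagonal matrices -/

/-- Restriction of polynomial functions to diagonal matrices. -/
def dg (n : ℕ) : MvPolynomial (Fin n × Fin n) ℂ →ₐ[ℂ] MvPolynomial (Fin n) ℂ :=
  MvPolynomial.aeval (fun ij => if ij.1 = ij.2 then MvPolynomial.X ij.1 else 0)

lemma dg_genMat (n : ℕ) : (genMat n).map (dg n).toRingHom = Matrix.diagonal MvPolynomial.X := by
  ext i j : 2
  simp [genMat, dg, Matrix.diagonal_apply]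

lemma eval_dg (n : ℕ) (p : MvPolynomial (Fin n × Fin n) ℂ) (y : Fin n → ℂ) :
    MvPolynomial.eval y (dg n p) =
      MvPolynomial.eval (fun ij => Matrix.diagonal y ij.1 ij.2) p := by
  have h : (MvPolynomial.aeval y : MvPolynomial (Fin n) ℂ →ₐ[ℂ] ℂ).comp (dg n) =
      MvPolynomial.aeval (fun ij => Matrix.diagonal y ij.1 ij.2) := by
    ext ij
    simp only [AlgHom.comp_apply, dg, MvPolynomial.aeval_X, Matrix.diagonal_apply]
    split_ifs <;> simp
  exact DFunLike.congr_fun h p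

lemma dg_invPoly (n : ℕ) (P G : MvPolynomial (Fin n) ℂ)
    (hG : MvPolynomial.aeval (fun i : Fin n => MvPolynomial.esymm (Fin n) ℂ (i + 1)) G = P) :
    dg n (invPoly n G) = P := by
  have h1 : dg n (invPoly n G) =
      MvPolynomial.aeval (cpar (Matrix.diagonal (MvPolynomial.X : Fin n → MvPolynomial (Fin n) ℂ))) G := by
    rw [invPoly, ← AlgHom.comp_apply, MvPolynomial.comp_aeval]
    congr 2
    ext i : 1
    rw [← dg_genMat]
    exact cpar_map (dg n).toRingHom _ i
  rw [h1, aeval_cpar _ MvPolynomial.X (Matrix.charpoly_diagonal _), hG]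
  exact MvPolynomial.aeval_X_left_apply _

lemma eval_invPoly (n : ℕ) (P G : MvPolynomial (Fin n) ℂ)
    (hG : MvPolynomial.aeval (fun i : Fin n => MvPolynomial.esymm (Fin n) ℂ (i + 1)) G = P)
    (B : Matrix (Fin n) (Fin n) ℂ) (y : Fin n → ℂ)
    (hy : B.charpoly = ∏ i, (Polynomial.X - Polynomial.C (y i))) :
    MvPolynomial.eval (fun ij => B ij.1 ij.2) (invPoly n G) = MvPolynomial.eval y P := by
  let ev : MvPolynomial (Fin n × Fin n) ℂ →ₐ[ℂ] ℂ := MvPolynomial.aeval (fun ij => B ij.1 ij.2)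
  have h0 : (genMat n).map ev.toRingHom = B := by
    ext i j
    simp [genMat, ev]
  have h1 : ev (invPoly n G) = MvPolynomial.aeval (cpar B) G := by
    rw [invPoly, ← AlgHom.comp_apply, MvPolynomial.comp_aeval]
    congr 2
    ext i : 1
    conv_rhs => rw [← h0]
    exact cpar_map ev.toRingHom _ i
  have h2 : ev (invPoly n G) = MvPolynomial.aeval y P := by
    rw [h1, aeval_cpar _ y hy, hG]
  exact h2

lemma dg_kry (n : ℕ) : dg n (kry (genMat n)).det = vdX n ℂ := by
  change (dg n).toRingHom _ = _
  rw [RingHom.map_det, RingHom.mapMatrix_apply, kry_map, dg_genMat, kry_diagonal]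
  rfl

lemma dg_totalDegree (n : ℕ) (p : MvPolynomial (Fin n × Fin n) ℂ) :
    (dg n p).totalDegree ≤ p.totalDegree := by
  rw [dg, MvPolynomial.aeval_def, MvPolynomial.eval₂_eq]
  apply MvPolynomial.totalDegree_finsetSum_le
  intro s hs
  refine (MvPolynomial.totalDegree_mul _ _).trans ?_
  rw [MvPolynomial.algebraMap_eq, MvPolynomial.totalDegree_C, zero_add]
  refine (MvPolynomial.totalDegree_finsetProd _ _).trans ?_
  refine le_trans ?_ (MvPolynomial.le_totalDegree hs)
  rw [Finsupp.sum]
  refine Finset.sum_le_sum fun ij _ => ?_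
  refine (MvPolynomial.totalDegree_pow _ _).trans ?_
  split_ifs
  · simp
  · simp

lemma det_homog {σ : Type*} {n : ℕ} (M : Matrix (Fin n) (Fin n) (MvPolynomial σ ℂ))
    (h : ∀ i j, (M i j).IsHomogeneous (j : ℕ)) : M.det.IsHomogeneous (∑ j : Fin n, (j : ℕ)) := by
  rw [Matrix.det_apply']
  apply MvPolynomial.IsHomogeneous.sum
  intro e _
  have h1 := (MvPolynomial.isHomogeneous_C σ (((Equiv.Perm.sign e : ℤ)) : ℂ)).mul
    (MvPolynomial.IsHomogeneous.prod Finset.univ (fun i => M (e i) i) (fun i => (i : ℕ))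
      (fun i _ => h _ _))
  simpa using h1

lemma genMat_pow_homog (n j : ℕ) (i k : Fin n) : ((genMat n ^ j) i k).IsHomogeneous j := by
  induction j generalizing k with
  | zero =>
    rw [pow_zero, Matrix.one_apply]
    split_ifs
    · exact MvPolynomial.isHomogeneous_one _ _
    · exact MvPolynomial.isHomogeneous_zero _ _ _
  | succ j ih =>
    rw [pow_succ, Matrix.mul_apply]
    apply MvPolynomial.IsHomogeneous.sum
    intro l _
    exact (ih l).mul (MvPolynomial.isHomogeneous_X _ _)

lemma kry_det_totalDegree (n : ℕ) :
    (kry (genMat n)).det.totalDegree = (vdX n ℂ).totalDegree := by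
  have h0 : (kry (genMat n)).det ≠ 0 := by
    intro h
    have := dg_kry n
    rw [h, map_zero] at this
    exact vdX_ne_zero this.symm
  rw [MvPolynomial.IsHomogeneous.totalDegree (det_homog _ _) h0, vdX,
    MvPolynomial.IsHomogeneous.totalDegree (det_homog _ _) vdX_ne_zero]
  · intro i j
    rw [Matrix.vandermonde_apply]
    simpa using (MvPolynomial.isHomogeneous_X ℂ i).pow (j : ℕ)
  · intro i j
    simp only [kry, Matrix.of_apply, Matrix.mulVec, dotProduct, Pi.one_apply, mul_one]
    apply MvPolynomial.IsHomogeneous.sum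
    intro l _
    exact genMat_pow_homog n _ _ _

lemma relPrime_kry (n : ℕ) (P g : MvPolynomial _ ℂ) (hg : dg n g = P)
    (hnd : ∀ i j, i ≠ j → ¬ (MvPolynomial.X i - MvPolynomial.X j) ∣ P) :
    IsRelPrime g (kry (genMat n)).det := by
  intro p hp1 hp2
  have h1 : IsUnit (dg n p) := by
    apply isRelPrime_vdX P hnd
    · rw [← hg]; exact map_dvd _ hp1
    · rw [← dg_kry]; exact map_dvd _ hp2
  obtain ⟨r, hr⟩ := hp2
  have hd := kry_det_totalDegree n
  have hdr := dg_kry n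
  rw [hr, map_mul] at hdr
  have hne : dg n p * dg n r ≠ 0 := by rw [hdr]; exact vdX_ne_zero
  have hp0 : p ≠ 0 := by rintro rfl; simp at hne
  have hr0 : r ≠ 0 := by rintro rfl; simp at hne
  rw [hr, MvPolynomial.totalDegree_mul_of_isDomain hp0 hr0, ← hdr,
    MvPolynomial.totalDegree_mul_of_isDomain (left_ne_zero_of_mul hne)
      (right_ne_zero_of_mul hne),
    (MvPolynomial.isUnit_iff_totalDegree_of_isReduced.1 h1).2] at hd
  have h3 := dg_totalDegree n r
  have h4 : p.totalDegree = 0 := by omega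
  have h5 := MvPolynomial.totalDegree_eq_zero_iff_eq_C.1 h4
  rw [MvPolynomial.isUnit_iff_totalDegree_of_isReduced]
  refine ⟨?_, h4⟩
  rw [isUnit_iff_ne_zero]
  intro h6
  apply hp0
  rw [h5, h6, map_zero]

lemma inv_dvd (n d m : ℕ) (P G : MvPolynomial (Fin n) ℂ)
    (hV : bigV n d ℂ = vdX n ℂ ^ m * P) (hsym : P.IsSymmetric)
    (hnd : ∀ i j, i ≠ j → ¬ (MvPolynomial.X i - MvPolynomial.X j) ∣ P)
    (hG : MvPolynomial.aeval (fun i : Fin n => MvPolynomial.esymm (Fin n) ℂ (i + 1)) G = P)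
    (c : MonIdx n d → ℂ) : invPoly n G ∣ kalmanDet d c := by
  have h1 := relPrime_kry n P (invPoly n G) (dg_invPoly n P G hG) hnd
  have h2 : IsRelPrime (invPoly n G) (symPow d (kry (genMat n))).det :=
    (h1.pow_right (n := d * Fintype.card (MonIdx n d))).of_dvd_right (symPow_det_dvd d _)
  exact h2.dvd_of_dvd_mul_right (inv_dvd_mul n d m P G hV hsym hnd hG c)

/-! ## Diagonalizable matrices -/

lemma exists_roots {n : ℕ} (B : Matrix (Fin n) (Fin n) ℂ) :
    ∃ y : Fin n → ℂ, B.charpoly = ∏ i, (Polynomial.X - Polynomial.C (y i)) := by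
  have hs := IsAlgClosed.splits B.charpoly
  have hc : Multiset.card B.charpoly.roots = n := by
    rw [← hs.natDegree_eq_card_roots, Matrix.charpoly_natDegree_eq_dim, Fintype.card_fin]
  have hl : B.charpoly.roots.toList.length = n := by rw [Multiset.length_toList, hc]
  refine ⟨fun i => B.charpoly.roots.toList.get (i.cast hl.symm), ?_⟩
  conv_lhs => rw [hs.eq_prod_roots_of_monic B.charpoly_monic]
  have : B.charpoly.roots = Finset.univ.val.map
      (fun i : Fin n => B.charpoly.roots.toList.get (i.cast hl.symm)) := by
    rw [Fin.univ_val_map]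
    conv_lhs => rw [← Multiset.coe_toList B.charpoly.roots]
    congr 1
    apply List.ext_get
    · simp [hc]
    · intro i h1 h2; simp
  conv_lhs => rw [this, Multiset.map_map]
  rfl

lemma exists_diag {n : ℕ} (B : Matrix (Fin n) (Fin n) ℂ) (y : Fin n → ℂ)
    (hy : B.charpoly = ∏ i, (Polynomial.X - Polynomial.C (y i))) (hinj : Function.Injective y) :
    ∃ Q : Matrix (Fin n) (Fin n) ℂ, IsUnit Q.det ∧ B * Q = Q * Matrix.diagonal y := by
  have hev : ∀ i, ∃ v : Fin n → ℂ, Module.End.HasEigenvector (Matrix.toLin' B) (y i) v := by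
    intro i
    apply Module.End.HasEigenvalue.exists_hasEigenvector
    rw [Module.End.hasEigenvalue_iff_isRoot_charpoly, Matrix.charpoly_toLin', hy,
      Polynomial.IsRoot.def, Polynomial.eval_prod]
    exact Finset.prod_eq_zero (Finset.mem_univ i) (by simp)
  choose v hv using hev
  have hli := Module.End.eigenvectors_linearIndependent' (Matrix.toLin' B) y hinj v hv
  refine ⟨Matrix.of fun i j => v j i, ?_, ?_⟩
  · rw [← Matrix.det_transpose, ← Matrix.isUnit_iff_isUnit_det]
    exact Matrix.linearIndependent_rows_iff_isUnit.1 hli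
  · ext i j
    rw [Matrix.mul_diagonal]
    have := congrFun (hv j).apply_eq_smul i
    rw [Matrix.toLin'_apply] at this
    simpa [Matrix.mulVec, dotProduct, Matrix.mul_apply, mul_comm] using this

lemma symPow_one {T : Type*} [CommRing T] {n : ℕ} (d : ℕ) :
    symPow d (1 : Matrix (Fin n) (Fin n) T) = 1 := by
  rw [← Matrix.diagonal_one, symPow_diagonal]
  simp [monVal]

lemma symPow_charpoly {n d : ℕ} (B : Matrix (Fin n) (Fin n) ℂ) (y : Fin n → ℂ)
    (hy : B.charpoly = ∏ i, (Polynomial.X - Polynomial.C (y i))) (hinj : Function.Injective y) :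
    (symPow d B).charpoly =
      ∏ τ : MonIdx n d, (Polynomial.X - Polynomial.C (monVal y τ)) := by
  obtain ⟨Q, hQ, hBQ⟩ := exists_diag B y hy hinj
  have h1 : symPow d Q * symPow d Q⁻¹ = 1 := by
    rw [← symPow_mul, Matrix.mul_nonsing_inv _ hQ, symPow_one]
  have h2 : symPow d Q⁻¹ * symPow d Q = 1 := by
    rw [← symPow_mul, Matrix.nonsing_inv_mul _ hQ, symPow_one]
  let U : (Matrix (MonIdx n d) (MonIdx n d) ℂ)ˣ := ⟨symPow d Q, symPow d Q⁻¹, h1, h2⟩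
  have h3 : symPow d B = U.val * symPow d (Matrix.diagonal y) * U⁻¹.val := by
    change _ = symPow d Q * symPow d (Matrix.diagonal y) * symPow d Q⁻¹
    rw [← symPow_mul, ← hBQ, symPow_mul, mul_assoc, h1, mul_one]
  rw [h3, Matrix.coe_units_inv, Matrix.charpoly_units_conj, symPow_diagonal, Matrix.charpoly_diagonal]

lemma eval_bigV {n d : ℕ} (y : Fin n → ℂ) :
    MvPolynomial.eval y (bigV n d ℂ) = vdm (fun τ : MonIdx n d => monVal y τ) := by
  rw [bigV, map_vdm]
  simp only [map_monVal, MvPolynomial.eval_X]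

lemma eval_vdX {n : ℕ} (y : Fin n → ℂ) :
    MvPolynomial.eval y (vdX n ℂ) = (Matrix.vandermonde y).det := by
  rw [vdX, RingHom.map_det]
  congr 1
  ext i j
  simp [Matrix.vandermonde_apply]

section
variable {n d : ℕ} {Δ Δd : MvPolynomial (Fin n × Fin n) ℂ}

lemma eval_disc (hΔ : ∀ B : Matrix (Fin n) (Fin n) ℂ,
      MvPolynomial.eval (fun ij => B ij.1 ij.2) Δ = pairProdSq B.charpoly.roots)
    (B : Matrix (Fin n) (Fin n) ℂ) (y : Fin n → ℂ)
    (hy : B.charpoly = ∏ i, (Polynomial.X - Polynomial.C (y i))) :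
    MvPolynomial.eval (fun ij => B ij.1 ij.2) Δ = (Matrix.vandermonde y).det ^ 2 := by
  rw [hΔ, hy, roots_charpoly_prod, pairProdSq_fin]

lemma dg_disc (hΔ : ∀ B : Matrix (Fin n) (Fin n) ℂ,
      MvPolynomial.eval (fun ij => B ij.1 ij.2) Δ = pairProdSq B.charpoly.roots) :
    dg n Δ = vdX n ℂ ^ 2 := by
  apply MvPolynomial.funext
  intro y
  rw [eval_dg, eval_disc hΔ _ y (Matrix.charpoly_diagonal _), map_pow, eval_vdX]

lemma disc_ne_zero (hΔ : ∀ B : Matrix (Fin n) (Fin n) ℂ,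
      MvPolynomial.eval (fun ij => B ij.1 ij.2) Δ = pairProdSq B.charpoly.roots) : Δ ≠ 0 := by
  rintro rfl
  have := dg_disc hΔ
  rw [map_zero] at this
  exact pow_ne_zero 2 vdX_ne_zero this.symm

lemma disc_factor (hΔ : ∀ B : Matrix (Fin n) (Fin n) ℂ,
      MvPolynomial.eval (fun ij => B ij.1 ij.2) Δ = pairProdSq B.charpoly.roots)
    (hΔd : ∀ B : Matrix (Fin n) (Fin n) ℂ,
      MvPolynomial.eval (fun ij => B ij.1 ij.2) Δd = pairProdSq (symPow d B).charpoly.roots)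
    (m : ℕ) (P G : MvPolynomial (Fin n) ℂ)
    (hV : bigV n d ℂ = vdX n ℂ ^ m * P)
    (hG : MvPolynomial.aeval (fun i : Fin n => MvPolynomial.esymm (Fin n) ℂ (i + 1)) G = P) :
    Δd = invPoly n G ^ 2 * Δ ^ m := by
  have key : (Δd - invPoly n G ^ 2 * Δ ^ m) * Δ = 0 := by
    apply MvPolynomial.funext
    intro b
    rw [map_mul, map_zero]
    by_cases h0 : MvPolynomial.eval b Δ = 0
    · rw [h0, mul_zero]
    · let B : Matrix (Fin n) (Fin n) ℂ := Matrix.of fun i j => b (i, j)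
      have hb : b = fun ij : Fin n × Fin n => B ij.1 ij.2 := rfl
      obtain ⟨y, hy⟩ := exists_roots B
      have hD := eval_disc hΔ B y hy
      rw [← hb] at hD
      have hinj : Function.Injective y := by
        rw [← Matrix.det_vandermonde_ne_zero_iff]
        intro h
        apply h0
        rw [hD, h]
        simp
      have hDd : MvPolynomial.eval b Δd = MvPolynomial.eval y (bigV n d ℂ) ^ 2 := by
        rw [hb, hΔd, symPow_charpoly B y hy hinj, roots_charpoly_prod, pairProdSq_fintype,
          eval_bigV]
      have hg := eval_invPoly n P G hG B y hy
      rw [← hb] at hg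
      rw [map_sub, map_mul, map_pow, map_pow, hDd, hg, hD, hV, map_mul, map_pow, eval_vdX]
      ring
  rcases mul_eq_zero.1 key with h | h
  · exact sub_eq_zero.1 h
  · exact absurd h (disc_ne_zero hΔ)

end

theorem main_aux (n d : ℕ) (hn : 0 < n) (hd : 0 < d)
    (Δ Δd S : MvPolynomial (Fin n × Fin n) ℂ) (k : ℕ)
    (hΔ : ∀ B : Matrix (Fin n) (Fin n) ℂ,
      MvPolynomial.eval (fun ij => B ij.1 ij.2) Δ = pairProdSq B.charpoly.roots)
    (hΔd : ∀ B : Matrix (Fin n) (Fin n) ℂ,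
      MvPolynomial.eval (fun ij => B ij.1 ij.2) Δd = pairProdSq (symPow d B).charpoly.roots)
    (hfac : Δd = S * Δ ^ k)
    (hmin : ∀ (S' : MvPolynomial (Fin n × Fin n) ℂ) (k' : ℕ), Δd = S' * Δ ^ k' →
      S.totalDegree ≤ S'.totalDegree) :
    ∃ g : MvPolynomial (Fin n × Fin n) ℂ, S = g ^ 2 ∧
      ∀ c : MonIdx n d → ℂ, c ≠ 0 → g ∣ kalmanDet d c := by
  obtain ⟨m, P, hV, hsym, hnd⟩ := exists_symmetric_factor n d
  obtain ⟨G, hG'⟩ := (MvPolynomial.esymmAlgHom_fin_bijective ℂ n).2 ⟨P, hsym⟩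
  have hG : MvPolynomial.aeval (fun i : Fin n => MvPolynomial.esymm (Fin n) ℂ (i + 1)) G = P := by
    have := congrArg Subtype.val hG'
    rwa [MvPolynomial.esymmAlgHom_apply] at this
  refine ⟨invPoly n G, ?_, fun c _ => inv_dvd n d m P G hV hsym hnd hG c⟩
  have hfac2 := disc_factor hΔ hΔd m P G hV hG
  have hle := hmin _ _ hfac2
  have hΔ0 := disc_ne_zero hΔ
  have hgP := dg_invPoly n P G hG
  have hP0 : P ≠ 0 := by
    rintro rfl
    rw [mul_zero] at hV
    exact bigV_ne_zero hV
  have hg0 : invPoly n G ≠ 0 := by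
    intro h
    rw [h, map_zero] at hgP
    exact hP0 hgP.symm
  rcases Nat.lt_or_ge n 2 with hn2 | hn2
  · have hone : Δ = 1 := by
      have : n = 1 := by omega
      subst this
      apply MvPolynomial.funext
      intro b
      obtain ⟨y, hy⟩ := exists_roots (Matrix.of fun i j => b (i, j))
      have hD := eval_disc hΔ _ y hy
      rw [map_one]
      refine Eq.trans hD ?_
      simp [Matrix.vandermonde]
    rw [hone, one_pow, mul_one] at hfac hfac2
    rw [← hfac, hfac2]
  · let i0 : Fin n := ⟨0, by omega⟩
    let i1 : Fin n := ⟨1, by omega⟩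
    have hi : i1 ≠ i0 := by simp [i0, i1]
    have hvd : (MvPolynomial.X i1 - MvPolynomial.X i0) ∣ vdX n ℂ := by
      rw [vdX_eq_prod]
      exact Finset.dvd_prod_of_mem
        (fun p : (_ : Fin n) × Fin n => (MvPolynomial.X p.2 - MvPolynomial.X p.1 : MvPolynomial (Fin n) ℂ))
        (a := ⟨i0, i1⟩) (by simp [i0, i1])
    rw [hfac] at hfac2
    rcases Nat.lt_or_ge m k with hmk | hmk
    · exfalso
      obtain ⟨t, rfl⟩ := Nat.exists_eq_add_of_lt hmk
      have h1 : S * Δ ^ (t + 1) = invPoly n G ^ 2 := by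
        apply mul_right_cancel₀ (pow_ne_zero m hΔ0)
        rw [← hfac2]
        ring
      have h2 := congrArg (dg n) h1
      rw [map_mul, map_pow, map_pow, hgP, dg_disc hΔ] at h2
      have h3 : (MvPolynomial.X i1 - MvPolynomial.X i0) ∣ P ^ 2 := by
        rw [← h2]
        apply Dvd.dvd.mul_left
        exact (hvd.trans (dvd_pow_self _ two_ne_zero)).trans (dvd_pow_self _ (Nat.succ_ne_zero t))
      exact hnd _ _ hi ((X_sub_X_prime hi).dvd_of_dvd_pow h3)
    · obtain ⟨t, rfl⟩ := Nat.exists_eq_add_of_le hmk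
      have h1 : S = invPoly n G ^ 2 * Δ ^ t := by
        apply mul_right_cancel₀ (pow_ne_zero k hΔ0)
        rw [hfac2]
        ring
      rcases Nat.eq_zero_or_pos t with rfl | ht
      · rw [h1, pow_zero, mul_one]
      · exfalso
        have h2 : Δ.totalDegree = 0 := by
          rw [h1, MvPolynomial.totalDegree_mul_of_isDomain (pow_ne_zero _ hg0)
            (pow_ne_zero _ hΔ0)] at hle
          obtain ⟨u, rfl⟩ := Nat.exists_eq_succ_of_ne_zero ht.ne'
          rw [pow_succ Δ u, MvPolynomial.totalDegree_mul_of_isDomain (pow_ne_zero _ hΔ0) hΔ0] at hle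
          omega
        have h3 := MvPolynomial.totalDegree_eq_zero_iff_eq_C.1 h2
        have h4 : IsUnit Δ := by
          rw [MvPolynomial.isUnit_iff_totalDegree_of_isReduced]
          refine ⟨?_, h2⟩
          rw [isUnit_iff_ne_zero]
          intro h6
          apply hΔ0
          rw [h3, h6, map_zero]
        have h5 := h4.map (dg n)
        rw [dg_disc hΔ] at h5
        have h6 := isUnit_of_dvd_unit (hvd.trans (dvd_pow_self _ two_ne_zero)) h5
        exact (X_sub_X_prime hi).not_isUnit h6

/-- Let `Δ_d^sat` be the polynomial of smallest total degree with
`Δ_d = Δ_d^sat · Δ^k` for some `k ∈ ℕ`. Then `Δ_d^sat` is a perfect square in `ℂ[A]`, and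
its square root divides `det K_d(f)` for every nonzero `f ∈ ℂ[x]_d`. -/
theorem sat_discriminant_is_square_and_divides (n d : ℕ) (hn : 0 < n) (hd : 0 < d)
    (Δ Δd S : MvPolynomial (Fin n × Fin n) ℂ) (k : ℕ)
    (hΔ : ∀ B : Matrix (Fin n) (Fin n) ℂ,
      MvPolynomial.eval (fun ij => B ij.1 ij.2) Δ = pairProdSq B.charpoly.roots)
    (hΔd : ∀ B : Matrix (Fin n) (Fin n) ℂ,
      MvPolynomial.eval (fun ij => B ij.1 ij.2) Δd = pairProdSq (symPow d B).charpoly.roots)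
    (hfac : Δd = S * Δ ^ k)
    (hmin : ∀ (S' : MvPolynomial (Fin n × Fin n) ℂ) (k' : ℕ), Δd = S' * Δ ^ k' →
      S.totalDegree ≤ S'.totalDegree) :
    ∃ g : MvPolynomial (Fin n × Fin n) ℂ, S = g ^ 2 ∧
      ∀ c : MonIdx n d → ℂ, c ≠ 0 → g ∣ kalmanDet d c := by
  exact main_aux n d hn hd Δ Δd S k hΔ hΔd hfac hmin

end
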